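/- Let G be a finite bipartite graph with color classes A and B, b : V(G) → ℕ, let C be a b-inconsistent flexible component hooked up by A, and let D be any b-flexible component that is not a b-inconsistent component hooked up by A. Then every edge between V(C) ∩ A and V(D) ∩ B is b-inevitable, and every edge between V(D) ∩ A and V(C) ∩ B is b-forbidden. -/

import Mathlib

open scoped symmDiff

variable {V : Type} [Fintype V]

/-- `G` is bipartite with color classes `A` and `B`. -/
structure Bipartition (G : SimpleGraph V) (A B : Set V) : Prop where
  disjoint : Disjoint A B
  cover : A ∪ B = Set.univ
  between : ∀ ⦃u v : V⦄, G.Adj u v → (u ∈ A ∧ v ∈ B) ∨ (u ∈ B ∧ v ∈ A)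

/-- `M` is a `b`-matching of `G`: a set of edges of `G` such that each vertex `v` is
incident to at most `b v` edges of `M`. -/
def IsBMatching (G : SimpleGraph V) (b : V → ℕ) (M : Set (Sym2 V)) : Prop :=
  M ⊆ G.edgeSet ∧ ∀ v : V, {e ∈ M | v ∈ e}.ncard ≤ b v

/-- `M` is a maximum `b`-matching of `G`. -/
def IsMaxBMatching (G : SimpleGraph V) (b : V → ℕ) (M : Set (Sym2 V)) : Prop :=
  IsBMatching G b M ∧ ∀ N : Set (Sym2 V), IsBMatching G b N → N.ncard ≤ M.ncard

/-- `E[X]`: the set of edges of `G` with both ends in `X`. -/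
def edgesIn (G : SimpleGraph V) (X : Set V) : Set (Sym2 V) :=
  {e ∈ G.edgeSet | ∀ v ∈ e, v ∈ X}

/-- `b(X) = ∑_{v ∈ X} b v`. -/
noncomputable def bSum (b : V → ℕ) (X : Set V) : ℕ := ∑ᶠ v ∈ X, b v

/-- `Z` is a `b`-verifying set: `b(Zᶜ) + |E[Z]|` equals the size of a maximum `b`-matching. -/
def IsVerifying (G : SimpleGraph V) (b : V → ℕ) (Z : Set V) : Prop :=
  ∃ M : Set (Sym2 V), IsMaxBMatching G b M ∧ bSum b Zᶜ + (edgesIn G Z).ncard = M.ncard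

/-- `v` is `M`-tight. -/
def IsTight (b : V → ℕ) (M : Set (Sym2 V)) (v : V) : Prop :=
  {e ∈ M | v ∈ e}.ncard = b v

/-- `v` is `M`-loose. -/
def IsLoose (b : V → ℕ) (M : Set (Sym2 V)) (v : V) : Prop :=
  {e ∈ M | v ∈ e}.ncard < b v

/-- `M` is a perfect `b`-matching. -/
def IsPerfect (G : SimpleGraph V) (b : V → ℕ) (M : Set (Sym2 V)) : Prop :=
  IsBMatching G b M ∧ ∀ v : V, IsTight b M v

/-- An edge is `b`-inevitable if it is an edge of `G` contained in every maximum `b`-matching. -/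
def IsInevitable (G : SimpleGraph V) (b : V → ℕ) (e : Sym2 V) : Prop :=
  e ∈ G.edgeSet ∧ ∀ M : Set (Sym2 V), IsMaxBMatching G b M → e ∈ M

/-- An edge is `b`-forbidden if it is an edge of `G` contained in no maximum `b`-matching. -/
def IsForbidden (G : SimpleGraph V) (b : V → ℕ) (e : Sym2 V) : Prop :=
  e ∈ G.edgeSet ∧ ∀ M : Set (Sym2 V), IsMaxBMatching G b M → e ∉ M

/-- An edge is `b`-flexible if some maximum `b`-matching contains it and some does not. -/
def IsFlexibleEdge (G : SimpleGraph V) (b : V → ℕ) (e : Sym2 V) : Prop :=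
  (∃ M : Set (Sym2 V), IsMaxBMatching G b M ∧ e ∈ M) ∧
  (∃ M : Set (Sym2 V), IsMaxBMatching G b M ∧ e ∉ M)

/-- The spanning subgraph of `G` whose edges are the `b`-flexible edges. -/
def flexGraph (G : SimpleGraph V) (b : V → ℕ) : SimpleGraph V where
  Adj u v := IsFlexibleEdge G b s(u, v)
  symm := by
    constructor
    intro u v h
    rwa [Sym2.eq_swap] at h
  loopless := by
    constructor
    intro v h
    obtain ⟨⟨M, hM, heM⟩, -⟩ := h
    exact G.loopless.irrefl v ((G.mem_edgeSet).mp (hM.1.1 heM))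

/-- A `b`-flexible component of `G`, identified with the corresponding connected
component of the spanning subgraph of flexible edges. -/
abbrev FlexComp (G : SimpleGraph V) (b : V → ℕ) := (flexGraph G b).ConnectedComponent

/-- `D(G;b)`: the set of vertices that are `M`-loose for some maximum `b`-matching `M`. -/
def Dset (G : SimpleGraph V) (b : V → ℕ) : Set V :=
  {v | ∃ M : Set (Sym2 V), IsMaxBMatching G b M ∧ IsLoose b M v}

/-- `c` is a `b`-loose flexible component. -/
def LooseComp (G : SimpleGraph V) (b : V → ℕ) (c : FlexComp G b) : Prop :=
  ∃ v ∈ c.supp, v ∈ Dset G b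

/-- `c` is a `b`-inactive flexible component. -/
def InactiveComp (G : SimpleGraph V) (b : V → ℕ) (c : FlexComp G b) : Prop :=
  ∃ v, c.supp = {v} ∧ b v = 0

/-- `c` is a `b`-inconsistent flexible component. -/
def InconsistentComp (G : SimpleGraph V) (b : V → ℕ) (c : FlexComp G b) : Prop :=
  LooseComp G b c ∨ ∃ v, c.supp = {v} ∧ b v = 0 ∧ ∃ u ∈ Dset G b, G.Adj v u

/-- `c` is a `b`-consistent flexible component. -/
def ConsistentComp (G : SimpleGraph V) (b : V → ℕ) (c : FlexComp G b) : Prop :=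
  ¬ InconsistentComp G b c

/-- `c` is a `b`-loose flexible component hooked up by the color class `W`. -/
def LooseHooked (G : SimpleGraph V) (b : V → ℕ) (W : Set V) (c : FlexComp G b) : Prop :=
  ∃ v ∈ c.supp ∩ W, v ∈ Dset G b

/-- `c` is a `b`-inactive flexible component hooked up by the color class `W`. -/
def InactiveHooked (G : SimpleGraph V) (b : V → ℕ) (W : Set V) (c : FlexComp G b) : Prop :=
  ∃ v, c.supp = {v} ∧ b v = 0 ∧ ∃ u ∈ Dset G b ∩ W, G.Adj v u

/-- `c` is a `b`-inconsistent flexible component hooked up by the color class `W`. -/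
def HookedUp (G : SimpleGraph V) (b : V → ℕ) (W : Set V) (c : FlexComp G b) : Prop :=
  LooseHooked G b W c ∨ InactiveHooked G b W c

/-- `X` is separating: empty or a union of vertex sets of `b`-flexible components. -/
def IsSeparating (G : SimpleGraph V) (b : V → ℕ) (X : Set V) : Prop :=
  ∃ S : Set (FlexComp G b), X = ⋃ c ∈ S, c.supp

/-- The number of edges in the list `es` incident to `v` that lie in `M`. -/
noncomputable def edgeDeg (es : List (Sym2 V)) (M : Set (Sym2 V)) (v : V) : ℕ :=
  {e : Sym2 V | e ∈ es ∧ v ∈ e ∧ e ∈ M}.ncard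

/-- `p` is an `M`-wedge path from `x` to `y`. -/
def IsWedgePath {G : SimpleGraph V} (M : Set (Sym2 V)) {x y : V} (p : G.Walk x y) : Prop :=
  p.IsPath ∧ (∀ v ∈ p.support, v ≠ y → edgeDeg p.edges M v = 1) ∧ edgeDeg p.edges M y = 0

/-- `p` is an `M`-saturated path between `x` and `y`. -/
def IsSaturatedPath {G : SimpleGraph V} (M : Set (Sym2 V)) {x y : V} (p : G.Walk x y) : Prop :=
  p.IsPath ∧ ∀ v ∈ p.support, edgeDeg p.edges M v = 1

/-- `p` is an `M`-exposed path between `x` and `y`. -/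
def IsExposedPath {G : SimpleGraph V} (M : Set (Sym2 V)) {x y : V} (p : G.Walk x y) : Prop :=
  p.IsPath ∧ ∀ v ∈ p.support, edgeDeg p.edges Mᶜ v = 1

/-- `p` is an `(M; A, B)`-ascending path from `u` to `v`. -/
def IsAscending {G : SimpleGraph V} (A B : Set V) (M : Set (Sym2 V)) {u v : V}
    (p : G.Walk u v) : Prop :=
  (u ∈ A → v ∈ A → IsWedgePath M p) ∧
  (u ∈ A → v ∈ B → IsSaturatedPath M p) ∧
  (u ∈ B → v ∈ A → IsExposedPath M p) ∧
  (u ∈ B → v ∈ B → IsWedgePath M p.reverse)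

/-- The one-step relation `⊴_A` on `b`-flexible components: `c₁ ⊴_A c₂` iff `c₁ = c₂`, or
there is a `b`-inevitable edge between `V(c₁) ∩ A` and `V(c₂) ∩ B`, or a `b`-forbidden edge
between `V(c₂) ∩ A` and `V(c₁) ∩ B`. -/
def StepRel (G : SimpleGraph V) (b : V → ℕ) (A B : Set V) (c₁ c₂ : FlexComp G b) : Prop :=
  c₁ = c₂ ∨
  (∃ u ∈ c₁.supp ∩ A, ∃ v ∈ c₂.supp ∩ B, IsInevitable G b s(u, v)) ∨
  (∃ u ∈ c₂.supp ∩ A, ∃ v ∈ c₁.supp ∩ B, IsForbidden G b s(u, v))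

/-- The one-step relation `⊴_A` restricted to `b`-consistent flexible components. -/
def ConsStepRel (G : SimpleGraph V) (b : V → ℕ) (A B : Set V) (c₁ c₂ : FlexComp G b) : Prop :=
  ConsistentComp G b c₁ ∧ ConsistentComp G b c₂ ∧ StepRel G b A B c₁ c₂

/-- `I` is a lower ideal of the relation `r`. -/
def IsLowerIdeal {α : Type*} (r : α → α → Prop) (I : Set α) : Prop :=
  ∀ ⦃c d : α⦄, d ∈ I → r c d → c ∈ I

/-- `I` is an upper ideal of the relation `r`. -/
def IsUpperIdeal {α : Type*} (r : α → α → Prop) (I : Set α) : Prop :=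
  ∀ ⦃c d : α⦄, c ∈ I → r c d → d ∈ I

/-! The theorem is a consequence of the min-max formula for the size of a maximum `b`-matching,
applied not only to `b` but also to `b` lowered or raised by one at a single vertex.

Every verifying set `Z` certifies that edges inside `Z` are inevitable, that edges inside `Zᶜ` are
forbidden, and that `D(G;b) ⊆ Z`. Hence a flexible edge joins `Z` to `Zᶜ`, so each flexible
component lies either inside `(A ∩ Z) ∪ (B \ Z)` or outside of it, and components hooked up by `A`
lie inside, whichever `Z` is chosen. For a component not hooked up by `A`, each vertex
`x ∈ A` is missed by some verifying set, because lowering `b x` lowers the maximum, and each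
vertex `x ∈ B` is contained in some verifying set, because raising `b x` does not raise the
maximum. -/

section Bipartite

variable {V : Type*} {G : SimpleGraph V} {A B : Set V} {u v : V}

theorem mem_iff_notMem_of_adj (hG : G.IsBipartiteWith A B) (h : G.Adj u v) : u ∈ A ↔ v ∉ A := by
  have := Set.disjoint_left.mp hG.disjoint
  rcases hG.mem_of_adj h with ⟨hu, hv⟩ | ⟨hu, hv⟩
  · exact iff_of_true hu fun hvA => this hvA hv
  · exact iff_of_false (fun huA => this huA hu) (not_not.mpr hv)

theorem isBipartiteWith_mono {H : SimpleGraph V} (hG : G.IsBipartiteWith A B) (hle : H ≤ G) :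
    H.IsBipartiteWith A B :=
  ⟨hG.disjoint, fun _ _ h => hG.mem_of_adj (hle h)⟩

end Bipartite

theorem Bipartition.isBipartiteWith {V : Type} {G : SimpleGraph V} {A B : Set V}
    (hG : Bipartition G A B) : G.IsBipartiteWith A B :=
  ⟨hG.disjoint, hG.between⟩

theorem exists_eq_add_single {ι : Type*} [DecidableEq ι] {b : ι → ℕ} {i : ι} (hi : 0 < b i) :
    ∃ b' : ι → ℕ, b = b' + Pi.single i 1 := by
  refine ⟨b - Pi.single i 1, (tsub_add_cancel_of_le fun j => ?_).symm⟩
  obtain rfl | hj := eq_or_ne j i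
  · simpa using Nat.one_le_iff_ne_zero.mpr hi.ne'
  · simp [hj]

section BSum

variable {V : Type} {b : V → ℕ} {X : Set V} {x : V}

theorem bSum_add_single_of_notMem [DecidableEq V] (hx : x ∉ X) :
    bSum (b + Pi.single x 1) X = bSum b X :=
  finsum_mem_congr rfl fun v hv => by simp [ne_of_mem_of_not_mem hv hx]

variable [Finite V]

theorem bSum_insert (hx : x ∉ X) : bSum b (insert x X) = b x + bSum b X :=
  finsum_mem_insert b hx (Set.toFinite _)

theorem bSum_add_single_of_mem [DecidableEq V] (hx : x ∈ X) :
    bSum (b + Pi.single x 1) X = bSum b X + 1 := by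
  have hxX : x ∉ X \ {x} := fun h => h.2 rfl
  rw [← Set.insert_sdiff_self_of_mem hx, bSum_insert hxX, bSum_insert hxX,
    bSum_add_single_of_notMem hxX]
  simp only [Pi.add_apply, Pi.single_eq_same]
  ring

theorem bSum_compl_ite_add_bSum_compl_ite (b : V → ℕ) (A Z W : Set V) :
    bSum b (A.ite (Z ∩ W) (Z ∪ W))ᶜ + bSum b (A.ite (Z ∪ W) (Z ∩ W))ᶜ =
      bSum b Zᶜ + bSum b Wᶜ := by
  have hunion : (A.ite (Z ∩ W) (Z ∪ W))ᶜ ∪ (A.ite (Z ∪ W) (Z ∩ W))ᶜ = Zᶜ ∪ Wᶜ := by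
    ext x
    simp only [Set.ite, Set.mem_union, Set.mem_inter_iff, Set.mem_sdiff, Set.mem_compl_iff]
    tauto
  have hinter : (A.ite (Z ∩ W) (Z ∪ W))ᶜ ∩ (A.ite (Z ∪ W) (Z ∩ W))ᶜ = Zᶜ ∩ Wᶜ := by
    ext x
    simp only [Set.ite, Set.mem_union, Set.mem_inter_iff, Set.mem_sdiff, Set.mem_compl_iff]
    tauto
  unfold bSum
  rw [← finsum_mem_union_inter (Set.toFinite _) (Set.toFinite _), hunion, hinter,
    finsum_mem_union_inter (Set.toFinite _) (Set.toFinite _)]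

end BSum

section BMatching

variable {V : Type} {G : SimpleGraph V} {b : V → ℕ} {M : Set (Sym2 V)} {e : Sym2 V} {u v x : V}

theorem IsBMatching.mono_graph {H : SimpleGraph V} (hM : IsBMatching H b M) (hHG : H ≤ G) :
    IsBMatching G b M :=
  ⟨hM.1.trans (SimpleGraph.edgeSet_mono hHG), hM.2⟩

theorem isBMatching_iff_isLoose_add_single [DecidableEq V] :
    IsBMatching G b M ↔
      IsBMatching G (b + Pi.single x 1) M ∧ IsLoose (b + Pi.single x 1) M x := by
  have hx : IsLoose (b + Pi.single x 1) M x ↔ {e ∈ M | x ∈ e}.ncard ≤ b x := by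
    simp [IsLoose]
  rw [hx, IsBMatching, IsBMatching, and_assoc]
  refine and_congr_right fun _ => ⟨fun h => ⟨fun v => (h v).trans (by simp), h x⟩, ?_⟩
  rintro ⟨h, hx⟩ v
  obtain rfl | hv := eq_or_ne v x
  · exact hx
  · simpa [hv] using h v

variable [Finite V]

theorem IsBMatching.subset {N : Set (Sym2 V)} (hM : IsBMatching G b M) (hNM : N ⊆ M) :
    IsBMatching G b N :=
  ⟨hNM.trans hM.1, fun v =>
    (Set.ncard_le_ncard (Set.inter_subset_inter_left {e | v ∈ e} hNM)).trans (hM.2 v)⟩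

theorem IsBMatching.isLoose_sdiff_singleton (hM : IsBMatching G b M) (he : e ∈ M) (hx : x ∈ e) :
    IsLoose b (M \ {e}) x := by
  have hssub : {f ∈ M \ {e} | x ∈ f} ⊂ {f ∈ M | x ∈ f} :=
    ⟨fun _ hf => ⟨hf.1.1, hf.2⟩, fun h => (h ⟨he, hx⟩).1.2 rfl⟩
  exact (Set.ncard_lt_ncard hssub).trans_le (hM.2 x)

theorem IsBMatching.pos_of_mem (hM : IsBMatching G b M) (he : e ∈ M) (hx : x ∈ e) : 0 < b x :=
  (Nat.zero_le _).trans_lt (hM.isLoose_sdiff_singleton he hx)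

theorem IsBMatching.sdiff_singleton [DecidableEq V] (hM : IsBMatching G (b + Pi.single x 1) M)
    (he : e ∈ M) (hx : x ∈ e) : IsBMatching G b (M \ {e}) :=
  isBMatching_iff_isLoose_add_single.mpr
    ⟨hM.subset Set.sdiff_subset, hM.isLoose_sdiff_singleton he hx⟩

theorem IsBMatching.isMaxBMatching_sdiff_singleton [DecidableEq V]
    (hM : IsBMatching G (b + Pi.single x 1) M) (hlt : ∀ N, IsBMatching G b N → N.ncard < M.ncard)
    (he : e ∈ M) (hx : x ∈ e) : IsMaxBMatching G b (M \ {e}) := by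
  refine ⟨hM.sdiff_singleton he hx, fun N hN => ?_⟩
  rw [← Nat.lt_succ_iff, Nat.succ_eq_add_one, Set.ncard_sdiff_singleton_add_one he]
  exact hlt N hN

theorem IsBMatching.insert_edge [DecidableEq V] (hM : IsBMatching G b M) (huv : G.Adj u v) :
    IsBMatching G (b + Pi.single u 1 + Pi.single v 1) (insert s(u, v) M) := by
  refine ⟨Set.insert_subset huv hM.1, fun x => ?_⟩
  have hMx := hM.2 x
  simp only [Pi.add_apply]
  by_cases hx : x ∈ s(u, v)
  · have hdeg : {e ∈ insert s(u, v) M | x ∈ e}.ncard ≤ {e ∈ M | x ∈ e}.ncard + 1 := by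
      refine le_trans (Set.ncard_le_ncard ?_) (Set.ncard_insert_le s(u, v) _)
      rintro e ⟨rfl | he, hxe⟩
      exacts [Or.inl rfl, Or.inr ⟨he, hxe⟩]
    have hbx : 1 ≤ (Pi.single u 1 : V → ℕ) x + (Pi.single v 1 : V → ℕ) x := by
      rcases Sym2.mem_iff.mp hx with rfl | rfl <;> simp
    omega
  · have hdeg : {e ∈ insert s(u, v) M | x ∈ e}.ncard ≤ {e ∈ M | x ∈ e}.ncard := by
      refine Set.ncard_le_ncard ?_
      rintro e ⟨rfl | he, hxe⟩
      exacts [absurd hxe hx, ⟨he, hxe⟩]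
    omega

theorem exists_isMaxBMatching (G : SimpleGraph V) (b : V → ℕ) : ∃ M, IsMaxBMatching G b M :=
  Set.exists_max_image {M | IsBMatching G b M} Set.ncard (Set.toFinite _) ⟨∅, by simp, by simp⟩

end BMatching

section KonigBound

/-- The bound `b(Zᶜ) + |E[Z]|` on the size of a `b`-matching; `Z` is verifying when the bound is
attained. -/
noncomputable def konigBound (G : SimpleGraph V) (b : V → ℕ) (Z : Set V) : ℕ :=
  bSum b Zᶜ + (edgesIn G Z).ncard

variable {V : Type} {G : SimpleGraph V} {A B : Set V} {b : V → ℕ} {M : Set (Sym2 V)}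
  {Z W : Set V} {e : Sym2 V} {u v x : V}

theorem mk_mem_edgesIn : s(u, v) ∈ edgesIn G Z ↔ G.Adj u v ∧ u ∈ Z ∧ v ∈ Z := by
  simp [edgesIn]

theorem edgesIn_mono (hZW : Z ⊆ W) : edgesIn G Z ⊆ edgesIn G W :=
  fun _ he => ⟨he.1, fun v hv => hZW (he.2 v hv)⟩

theorem edgesIn_deleteEdges (S : Set (Sym2 V)) :
    edgesIn (G.deleteEdges S) Z = edgesIn G Z \ S := by
  ext e
  simp only [edgesIn, SimpleGraph.edgeSet_deleteEdges, Set.mem_sdiff, Set.mem_ofPred_eq]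
  tauto

theorem konigBound_deleteEdges_of_notMem (he : e ∉ edgesIn G Z) :
    konigBound (G.deleteEdges {e}) b Z = konigBound G b Z := by
  rw [konigBound, konigBound, edgesIn_deleteEdges, Set.sdiff_singleton_eq_self he]

theorem konigBound_add_single_of_mem [DecidableEq V] (hx : x ∈ Z) :
    konigBound G (b + Pi.single x 1) Z = konigBound G b Z := by
  rw [konigBound, konigBound, bSum_add_single_of_notMem (Set.notMem_compl_iff.mpr hx)]

variable [Finite V]

theorem konigBound_deleteEdges_of_mem (he : e ∈ edgesIn G Z) :
    konigBound (G.deleteEdges {e}) b Z + 1 = konigBound G b Z := by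
  rw [konigBound, konigBound, edgesIn_deleteEdges, add_assoc,
    Set.ncard_sdiff_singleton_add_one he]

theorem konigBound_add_single_of_notMem [DecidableEq V] (hx : x ∉ Z) :
    konigBound G (b + Pi.single x 1) Z = konigBound G b Z + 1 := by
  rw [konigBound, konigBound, bSum_add_single_of_mem (Set.mem_compl hx), add_right_comm]

theorem konigBound_sdiff_singleton_le (G : SimpleGraph V) (b : V → ℕ) (Z : Set V) (x : V) :
    konigBound G b (Z \ {x}) ≤ konigBound G b Z + b x := by
  have hsum : bSum b (Z \ {x})ᶜ ≤ b x + bSum b Zᶜ := by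
    rw [Set.compl_sdiff, Set.singleton_union]
    by_cases hx : x ∈ Zᶜ
    · rw [Set.insert_eq_of_mem hx]
      exact Nat.le_add_left _ _
    · exact (bSum_insert hx).le
  have hedges : (edgesIn G (Z \ {x})).ncard ≤ (edgesIn G Z).ncard :=
    Set.ncard_le_ncard (edgesIn_mono Set.sdiff_subset)
  unfold konigBound
  omega

theorem ncard_edgesIn_ite_add_ncard_edgesIn_ite_le (hG : G.IsBipartiteWith A B) (Z W : Set V) :
    (edgesIn G (A.ite (Z ∩ W) (Z ∪ W))).ncard + (edgesIn G (A.ite (Z ∪ W) (Z ∩ W))).ncard ≤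
      (edgesIn G Z).ncard + (edgesIn G W).ncard := by
  set P := edgesIn G (A.ite (Z ∩ W) (Z ∪ W)) with hP
  set Q := edgesIn G (A.ite (Z ∪ W) (Z ∩ W)) with hQ
  have hunion : P ∪ Q ⊆ edgesIn G Z ∪ edgesIn G W := by
    rintro ⟨u, v⟩ he
    simp only [hP, hQ, Set.mem_union, mk_mem_edgesIn, Set.ite, Set.mem_inter_iff,
      Set.mem_sdiff] at he ⊢
    have huv : G.Adj u v := by tauto
    have := mem_iff_notMem_of_adj hG huv
    tauto
  have hinter : P ∩ Q ⊆ edgesIn G Z ∩ edgesIn G W := by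
    rintro ⟨u, v⟩ he
    simp only [hP, hQ, Set.mem_union, mk_mem_edgesIn, Set.ite, Set.mem_inter_iff,
      Set.mem_sdiff] at he ⊢
    tauto
  rw [← Set.ncard_union_add_ncard_inter P Q,
    ← Set.ncard_union_add_ncard_inter (edgesIn G Z) (edgesIn G W)]
  exact add_le_add (Set.ncard_le_ncard hunion) (Set.ncard_le_ncard hinter)

theorem konigBound_ite_add_konigBound_ite_le (hG : G.IsBipartiteWith A B) (b : V → ℕ)
    (Z W : Set V) :
    konigBound G b (A.ite (Z ∩ W) (Z ∪ W)) + konigBound G b (A.ite (Z ∪ W) (Z ∩ W)) ≤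
      konigBound G b Z + konigBound G b W := by
  have hsum := bSum_compl_ite_add_bSum_compl_ite b A Z W
  have hedges := ncard_edgesIn_ite_add_ncard_edgesIn_ite_le hG Z W
  simp only [konigBound]
  omega

theorem IsBMatching.ncard_le_konigBound (hM : IsBMatching G b M) (Z : Set V) :
    M.ncard ≤ konigBound G b Z := by
  have hcover : M ⊆ (⋃ v ∈ Zᶜ, {e ∈ M | v ∈ e}) ∪ edgesIn G Z := by
    intro e he
    by_cases heZ : ∀ v ∈ e, v ∈ Z
    · exact Or.inr ⟨hM.1 he, heZ⟩
    · push Not at heZ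
      obtain ⟨v, hve, hvZ⟩ := heZ
      exact Or.inl (Set.mem_biUnion hvZ ⟨he, hve⟩)
  calc M.ncard
      ≤ (⋃ v ∈ Zᶜ, {e ∈ M | v ∈ e}).ncard + (edgesIn G Z).ncard :=
        (Set.ncard_le_ncard hcover (Set.toFinite _)).trans (Set.ncard_union_le _ _)
    _ ≤ (∑ᶠ v ∈ Zᶜ, {e ∈ M | v ∈ e}.ncard) + (edgesIn G Z).ncard := by
        gcongr
        exact (Set.toFinite _).ncard_biUnion_le _
    _ ≤ konigBound G b Z := by
        unfold konigBound bSum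
        rw [finsum_mem_eq_finite_toFinset_sum _ (Set.toFinite _),
          finsum_mem_eq_finite_toFinset_sum _ (Set.toFinite _)]
        gcongr
        exact hM.2 _

theorem IsBMatching.ncard_lt_konigBound_of_isLoose (hM : IsBMatching G b M) (hx : x ∉ Z)
    (hloose : IsLoose b M x) : M.ncard < konigBound G b Z := by
  classical
  obtain ⟨b', rfl⟩ := exists_eq_add_single ((Nat.zero_le _).trans_lt hloose)
  rw [konigBound_add_single_of_notMem hx, Nat.lt_succ_iff]
  exact (isBMatching_iff_isLoose_add_single.mpr ⟨hM, hloose⟩).ncard_le_konigBound Z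

theorem IsBMatching.ncard_lt_konigBound_of_notMem (hM : IsBMatching G b M)
    (he : e ∈ edgesIn G Z) (heM : e ∉ M) : M.ncard < konigBound G b Z := by
  have hM' : IsBMatching (G.deleteEdges {e}) b M :=
    ⟨G.edgeSet_deleteEdges {e} ▸ Set.subset_sdiff_singleton hM.1 heM, hM.2⟩
  rw [← konigBound_deleteEdges_of_mem he, Nat.lt_succ_iff]
  exact hM'.ncard_le_konigBound Z

theorem IsBMatching.ncard_lt_konigBound_of_mem (hM : IsBMatching G b M) (hu : u ∉ Z) (hv : v ∉ Z)
    (huvM : s(u, v) ∈ M) : M.ncard < konigBound G b Z := by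
  classical
  obtain ⟨b', rfl⟩ := exists_eq_add_single (hM.pos_of_mem huvM (Sym2.mem_mk_left u v))
  have hM' : IsBMatching G b' (M \ {s(u, v)}) := hM.sdiff_singleton huvM (Sym2.mem_mk_left u v)
  have hloose : IsLoose b' (M \ {s(u, v)}) v := by
    simpa [IsLoose, (hM.1 huvM : G.Adj u v).ne'] using
      hM.isLoose_sdiff_singleton huvM (Sym2.mem_mk_right u v)
  rw [konigBound_add_single_of_notMem hu, ← Set.ncard_sdiff_singleton_add_one huvM]
  exact Nat.succ_lt_succ (hM'.ncard_lt_konigBound_of_isLoose hv hloose)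

end KonigBound

section MinMax

variable {V : Type} [Finite V] {G : SimpleGraph V} {A B : Set V} {b : V → ℕ} {u v : V} {k : ℕ}

theorem le_konigBound_deleteEdges_of_eq_zero (hk : ∀ Z, k ≤ konigBound G b Z) (hu : b u = 0)
    (v : V) (Z : Set V) : k ≤ konigBound (G.deleteEdges {s(u, v)}) b Z := by
  have huZ : s(u, v) ∉ edgesIn G (Z \ {u}) := fun h => (mk_mem_edgesIn.mp h).2.1.2 rfl
  calc k ≤ konigBound G b (Z \ {u}) := hk _
    _ = konigBound (G.deleteEdges {s(u, v)}) b (Z \ {u}) :=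
        (konigBound_deleteEdges_of_notMem huZ).symm
    _ ≤ konigBound (G.deleteEdges {s(u, v)}) b Z + b u := konigBound_sdiff_singleton_le _ _ _ _
    _ = konigBound (G.deleteEdges {s(u, v)}) b Z := by rw [hu, add_zero]

theorem konigBound_add_single_add_single_le [DecidableEq V] (huv : G.Adj u v) {W : Set V}
    (hW : u ∈ W ∨ v ∈ W) :
    konigBound G (b + Pi.single u 1 + Pi.single v 1) W ≤
      konigBound (G.deleteEdges {s(u, v)}) b W + 1 := by
  by_cases huvW : u ∈ W ∧ v ∈ W
  · rw [konigBound_add_single_of_mem huvW.2, konigBound_add_single_of_mem huvW.1,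
      konigBound_deleteEdges_of_mem (mk_mem_edgesIn.mpr ⟨huv, huvW⟩)]
  · rw [konigBound_deleteEdges_of_notMem fun h => huvW (mk_mem_edgesIn.mp h).2]
    rcases hW with huW | hvW
    · rw [konigBound_add_single_of_notMem fun hvW => huvW ⟨huW, hvW⟩,
        konigBound_add_single_of_mem huW]
    · rw [konigBound_add_single_of_mem hvW,
        konigBound_add_single_of_notMem fun huW => huvW ⟨huW, hvW⟩]

/- If both alternatives fail, the first fails at some `Z` containing both `u` and `v`, and the
second fails at some `W` containing neither. Then `uv` lies in neither of the two sets obtained by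
uncrossing `Z` and `W`, so submodularity in `G - uv` contradicts `hk`. -/
theorem le_konigBound_deleteEdges_or [DecidableEq V] (hG : G.IsBipartiteWith A B)
    (huv : G.Adj u v)
    (hk : ∀ Z, k ≤ konigBound G (b + Pi.single u 1 + Pi.single v 1) Z) :
    (∀ Z, k ≤ konigBound (G.deleteEdges {s(u, v)}) (b + Pi.single u 1 + Pi.single v 1) Z) ∨
      ∀ W, k ≤ konigBound (G.deleteEdges {s(u, v)}) b W + 1 := by
  by_contra! ⟨⟨Z, hZ⟩, W, hW⟩
  set b' := b + Pi.single u 1 + Pi.single v 1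
  set H := G.deleteEdges {s(u, v)} with hH
  have hkH {Y : Set V} (hY : ¬ (u ∈ Y ∧ v ∈ Y)) : k ≤ konigBound H b' Y := by
    rw [hH, konigBound_deleteEdges_of_notMem fun h => hY (mk_mem_edgesIn.mp h).2]
    exact hk Y
  have huvZ : u ∈ Z ∧ v ∈ Z := by
    by_contra huvZ
    exact (hkH huvZ).not_gt hZ
  obtain ⟨huW, hvW⟩ : u ∉ W ∧ v ∉ W := by
    by_contra! huvW
    exact hW.not_ge <| (hk W).trans <|
      konigBound_add_single_add_single_le huv (or_iff_not_imp_left.mpr huvW)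
  have hHW : konigBound H b' W = konigBound H b W + 1 + 1 := by
    rw [konigBound_add_single_of_notMem hvW, konigBound_add_single_of_notMem huW]
  have huvA := mem_iff_notMem_of_adj hG huv
  have hmeet : ¬ (u ∈ A.ite (Z ∩ W) (Z ∪ W) ∧ v ∈ A.ite (Z ∩ W) (Z ∪ W)) := by
    simp only [Set.ite, Set.mem_union, Set.mem_inter_iff, Set.mem_sdiff]
    tauto
  have hjoin : ¬ (u ∈ A.ite (Z ∪ W) (Z ∩ W) ∧ v ∈ A.ite (Z ∪ W) (Z ∩ W)) := by
    simp only [Set.ite, Set.mem_union, Set.mem_inter_iff, Set.mem_sdiff]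
    tauto
  have hHG : H.IsBipartiteWith A B := isBipartiteWith_mono hG (G.deleteEdges_le _)
  have hsub := konigBound_ite_add_konigBound_ite_le hHG b' Z W
  have hkmeet := hkH hmeet
  have hkjoin := hkH hjoin
  omega

theorem exists_isBMatching_of_le_konigBound (hG : G.IsBipartiteWith A B)
    (hk : ∀ Z, k ≤ konigBound G b Z) : ∃ M, IsBMatching G b M ∧ k ≤ M.ncard := by
  classical
  induction G using WellFoundedLT.induction generalizing b k with
  | ind G ih =>
  obtain hempty | ⟨⟨u, v⟩, huv⟩ := G.edgeSet.eq_empty_or_nonempty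
  · have hk0 : k ≤ 0 := by simpa [konigBound, bSum, edgesIn, hempty] using hk Set.univ
    exact ⟨∅, by simp [IsBMatching], by simpa using hk0⟩
  change G.Adj u v at huv
  have hle : G.deleteEdges {s(u, v)} ≤ G := G.deleteEdges_le _
  have hlt : G.deleteEdges {s(u, v)} < G :=
    hle.lt_of_not_ge fun h => by simpa using h huv
  have ih {b : V → ℕ} {k : ℕ} := ih _ hlt (b := b) (k := k) (isBipartiteWith_mono hG hle)
  by_cases hH : ∀ Z, k ≤ konigBound (G.deleteEdges {s(u, v)}) b Z
  · obtain ⟨M, hM, hkM⟩ := ih hH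
    exact ⟨M, hM.mono_graph hle, hkM⟩
  have hu : 0 < b u := Nat.pos_of_ne_zero fun hu =>
    hH (le_konigBound_deleteEdges_of_eq_zero hk hu v)
  have hv : 0 < b v := Nat.pos_of_ne_zero fun hv =>
    hH (Sym2.eq_swap ▸ le_konigBound_deleteEdges_of_eq_zero hk hv u)
  obtain ⟨b, rfl⟩ := exists_eq_add_single hv
  obtain ⟨b, rfl⟩ := exists_eq_add_single (b := b) (i := u) (by simpa [huv.ne] using hu)
  have hkW := (le_konigBound_deleteEdges_or hG huv hk).resolve_left hH
  obtain ⟨N, hN, hkN⟩ := ih fun W => Nat.sub_le_of_le_add (hkW W)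
  have huvN : s(u, v) ∉ N := fun h => by simpa using hN.1 h
  refine ⟨insert s(u, v) N, (hN.mono_graph hle).insert_edge huv, ?_⟩
  rw [Set.ncard_insert_of_notMem huvN]
  exact Nat.le_add_of_sub_le hkN

theorem exists_isVerifying (hG : G.IsBipartiteWith A B) (b : V → ℕ) : ∃ Z, IsVerifying G b Z := by
  obtain ⟨Z, -, hZ⟩ := Set.exists_min_image Set.univ (konigBound G b) (Set.toFinite _) ⟨∅, trivial⟩
  obtain ⟨M, hM, hZM⟩ := exists_isBMatching_of_le_konigBound hG fun W => hZ W trivial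
  exact ⟨Z, M, ⟨hM, fun N hN => (hN.ncard_le_konigBound Z).trans hZM⟩,
    hZM.antisymm (hM.ncard_le_konigBound Z)⟩

end MinMax

section Verifying

variable {V : Type} {G : SimpleGraph V} {A B : Set V} {b : V → ℕ} {M : Set (Sym2 V)} {Z : Set V}
  {e : Sym2 V} {u v x : V}

theorem IsVerifying.konigBound_eq (hZ : IsVerifying G b Z) (hM : IsMaxBMatching G b M) :
    konigBound G b Z = M.ncard := by
  obtain ⟨N, hN, hZN⟩ := hZ
  exact hZN.trans ((hM.2 N hN.1).antisymm (hN.2 M hM.1))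

variable [Finite V]

theorem IsMaxBMatching.isVerifying_of_le (hM : IsMaxBMatching G b M)
    (hZ : konigBound G b Z ≤ M.ncard) : IsVerifying G b Z :=
  ⟨M, hM, hZ.antisymm (hM.1.ncard_le_konigBound Z)⟩

theorem IsVerifying.dset_subset (hZ : IsVerifying G b Z) : Dset G b ⊆ Z := by
  rintro x ⟨M, hM, hloose⟩
  by_contra hx
  exact (hM.1.ncard_lt_konigBound_of_isLoose hx hloose).ne' (hZ.konigBound_eq hM)

theorem IsVerifying.isInevitable (hZ : IsVerifying G b Z) (he : e ∈ edgesIn G Z) :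
    IsInevitable G b e := by
  refine ⟨he.1, fun M hM => ?_⟩
  by_contra heM
  exact (hM.1.ncard_lt_konigBound_of_notMem he heM).ne' (hZ.konigBound_eq hM)

theorem IsVerifying.isForbidden (hZ : IsVerifying G b Z) (huv : G.Adj u v) (hu : u ∉ Z)
    (hv : v ∉ Z) : IsForbidden G b s(u, v) :=
  ⟨huv, fun _ hM huvM =>
    (hM.1.ncard_lt_konigBound_of_mem hu hv huvM).ne' (hZ.konigBound_eq hM)⟩

theorem exists_isVerifying_notMem (hG : G.IsBipartiteWith A B) (hx : x ∉ Dset G b) :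
    ∃ Z, IsVerifying G b Z ∧ x ∉ Z := by
  classical
  obtain ⟨M, hM⟩ := exists_isMaxBMatching G b
  obtain hbx | hbx := (b x).eq_zero_or_pos
  · obtain ⟨Z, hZ⟩ := exists_isVerifying hG b
    refine ⟨Z \ {x}, hM.isVerifying_of_le ?_, fun h => h.2 rfl⟩
    simpa [hbx, hZ.konigBound_eq hM] using konigBound_sdiff_singleton_le G b Z x
  · obtain ⟨b, rfl⟩ := exists_eq_add_single hbx
    obtain ⟨Z, N, hN, hZN⟩ := exists_isVerifying hG b
    obtain ⟨hN', hloose⟩ := isBMatching_iff_isLoose_add_single.mp hN.1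
    have hlt : N.ncard < M.ncard := by
      by_contra! hMN
      exact hx ⟨N, ⟨hN', fun L hL => (hM.2 L hL).trans hMN⟩, hloose⟩
    have hxZ : x ∉ Z := fun hxZ => by
      have hMZ := hM.1.ncard_le_konigBound Z
      rw [konigBound_add_single_of_mem hxZ, konigBound, hZN] at hMZ
      exact hMZ.not_gt hlt
    refine ⟨Z, hM.isVerifying_of_le ?_, hxZ⟩
    rw [konigBound_add_single_of_notMem hxZ, konigBound, hZN]
    exact hlt

end Verifying

section FlexComp

variable {V : Type} [Finite V] {G : SimpleGraph V} {A B : Set V} {b : V → ℕ} {M : Set (Sym2 V)}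
  {Z : Set V} {u v x y : V} {c : FlexComp G b}

theorem IsVerifying.mem_iff_notMem_of_flexGraph_adj (hZ : IsVerifying G b Z)
    (h : (flexGraph G b).Adj u v) : u ∈ Z ↔ v ∉ Z := by
  obtain ⟨⟨M, hM, huvM⟩, N, hN, huvN⟩ := h
  have huv : G.Adj u v := hM.1.1 huvM
  refine ⟨fun hu hv => huvN ?_, fun hv => ?_⟩
  · exact (hZ.isInevitable (mk_mem_edgesIn.mpr ⟨huv, hu, hv⟩)).2 N hN
  · by_contra hu
    exact (hZ.isForbidden huv hu hv).2 M hM huvM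

theorem IsVerifying.mem_iff_mem_of_mem_supp (hG : G.IsBipartiteWith A B) (hZ : IsVerifying G b Z)
    (hx : x ∈ c.supp) (hy : y ∈ c.supp) : (x ∈ A ↔ x ∈ Z) ↔ (y ∈ A ↔ y ∈ Z) := by
  obtain ⟨p⟩ : (flexGraph G b).Reachable x y :=
    SimpleGraph.ConnectedComponent.exact (hx.trans hy.symm)
  clear hx hy
  induction p with
  | nil => rfl
  | @cons u v w h _ ih =>
    have huvZ := hZ.mem_iff_notMem_of_flexGraph_adj h
    obtain ⟨⟨M, hM, huvM⟩, -⟩ := h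
    have huvA := mem_iff_notMem_of_adj hG (hM.1.1 huvM)
    tauto

theorem IsVerifying.mem_iff_mem_of_hookedUp (hG : G.IsBipartiteWith A B) (hZ : IsVerifying G b Z)
    (hc : HookedUp G b A c) (hx : x ∈ c.supp) : x ∈ A ↔ x ∈ Z := by
  rcases hc with ⟨u, ⟨huc, huA⟩, huD⟩ | ⟨v, hsupp, hv, u, ⟨huD, huA⟩, hvu⟩
  · exact (hZ.mem_iff_mem_of_mem_supp hG hx huc).mpr (iff_of_true huA (hZ.dset_subset huD))
  · obtain rfl : x = v := by simpa [hsupp] using hx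
    refine iff_of_false (fun hxA => (mem_iff_notMem_of_adj hG hvu).mp hxA huA) fun hxZ => ?_
    obtain ⟨M, hM⟩ := exists_isMaxBMatching G b
    have hmem := (hZ.isInevitable
      (mk_mem_edgesIn.mpr ⟨hvu, hxZ, hZ.dset_subset huD⟩)).2 M hM
    exact (hM.1.pos_of_mem hmem (Sym2.mem_mk_left x u)).ne' hv

theorem supp_eq_singleton_of_eq_zero (hx : b x = 0) (hxc : x ∈ c.supp) : c.supp = {x} := by
  refine Set.eq_singleton_iff_unique_mem.mpr ⟨hxc, fun y hy => ?_⟩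
  obtain ⟨p⟩ : (flexGraph G b).Reachable x y :=
    SimpleGraph.ConnectedComponent.exact (hxc.trans hy.symm)
  cases p with
  | nil => rfl
  | cons h _ =>
    obtain ⟨⟨M, hM, hxM⟩, -⟩ := h
    exact absurd hx (hM.1.pos_of_mem hxM (Sym2.mem_mk_left _ _)).ne'

theorem hookedUp_of_ncard_lt [DecidableEq V] (hG : G.IsBipartiteWith A B) (hxc : x ∈ c.supp)
    (hxA : x ∉ A) (hM : IsBMatching G (b + Pi.single x 1) M)
    (hlt : ∀ N, IsBMatching G b N → N.ncard < M.ncard) : HookedUp G b A c := by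
  have hmax {e : Sym2 V} (he : e ∈ M) (hxe : x ∈ e) : IsMaxBMatching G b (M \ {e}) :=
    hM.isMaxBMatching_sdiff_singleton hlt he hxe
  have hnbr {y : V} (hy : s(x, y) ∈ M) : y ∈ Dset G b ∩ A := by
    have hxy : G.Adj x y := hM.1 hy
    refine ⟨⟨_, hmax hy (Sym2.mem_mk_left x y), ?_⟩, ?_⟩
    · simpa [IsLoose, hxy.ne'] using hM.isLoose_sdiff_singleton hy (Sym2.mem_mk_right x y)
    · exact not_not.mp (mt (mem_iff_notMem_of_adj hG hxy).mpr hxA)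
  have hdeg : b x < {e ∈ M | x ∈ e}.ncard := by
    by_contra! hdeg
    have hMb : IsBMatching G b M := isBMatching_iff_isLoose_add_single.mpr
      ⟨hM, by simpa [IsLoose, Nat.lt_succ_iff] using hdeg⟩
    exact (hlt M hMb).false
  obtain hbx | hbx := (b x).eq_zero_or_pos
  · obtain ⟨e, heM, y, rfl⟩ := Set.nonempty_of_ncard_ne_zero (Nat.ne_zero_of_lt hdeg)
    exact Or.inr ⟨x, supp_eq_singleton_of_eq_zero hbx hxc, hbx, y, hnbr heM, hM.1 heM⟩
  · obtain ⟨e, f, ⟨heM, y, rfl⟩, ⟨hfM, hxf⟩, hef⟩ :=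
      (Set.one_lt_ncard_iff).mp (Nat.lt_of_le_of_lt hbx hdeg)
    have hflex : (flexGraph G b).Adj x y :=
      ⟨⟨M \ {f}, hmax hfM hxf, heM, hef⟩, M \ {s(x, y)}, hmax heM (Sym2.mem_mk_left x y),
        fun h => h.2 rfl⟩
    exact Or.inl ⟨y, ⟨c.mem_supp_of_adj_mem_supp hxc hflex, (hnbr heM).2⟩, (hnbr heM).1⟩

theorem exists_isVerifying_mem (hG : G.IsBipartiteWith A B) (hc : ¬ HookedUp G b A c)
    (hxc : x ∈ c.supp) (hxA : x ∉ A) : ∃ Z, IsVerifying G b Z ∧ x ∈ Z := by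
  classical
  obtain ⟨M, hM⟩ := exists_isMaxBMatching G b
  obtain ⟨Z, N, hN, hZN⟩ := exists_isVerifying hG (b + Pi.single x 1)
  have hNM : N.ncard ≤ M.ncard := by
    by_contra! hMN
    exact hc <| hookedUp_of_ncard_lt hG hxc hxA hN.1 fun L hL => (hM.2 L hL).trans_lt hMN
  have hMZ := hM.1.ncard_le_konigBound Z
  have hxZ : x ∈ Z := by
    by_contra hxZ
    have hZ := konigBound_add_single_of_notMem (G := G) (b := b) hxZ
    rw [konigBound, hZN] at hZ
    omega
  refine ⟨Z, hM.isVerifying_of_le ?_, hxZ⟩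
  rw [← konigBound_add_single_of_mem hxZ, konigBound, hZN]
  exact hNM

end FlexComp

/-- If `C` is a `b`-inconsistent flexible component hooked up by `A` and `D` is a
`b`-flexible component not inconsistent hooked up by `A`, then every edge between
`V(C) ∩ A` and `V(D) ∩ B` is `b`-inevitable and every edge between `V(D) ∩ A` and
`V(C) ∩ B` is `b`-forbidden. -/
theorem stmt_10 (G : SimpleGraph V) (A B : Set V) (hG : Bipartition G A B) (b : V → ℕ)
    (c d : FlexComp G b) (hc : HookedUp G b A c) (hd : ¬ HookedUp G b A d) :
    (∀ u ∈ c.supp ∩ A, ∀ v ∈ d.supp ∩ B, G.Adj u v → IsInevitable G b s(u, v)) ∧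
    (∀ u ∈ d.supp ∩ A, ∀ v ∈ c.supp ∩ B, G.Adj u v → IsForbidden G b s(u, v)) := by
  have hAB := hG.isBipartiteWith
  refine ⟨fun u ⟨huc, huA⟩ v ⟨hvd, _⟩ huv => ?_, fun u ⟨hud, huA⟩ v ⟨hvc, _⟩ huv => ?_⟩
  · have hvA : v ∉ A := (mem_iff_notMem_of_adj hAB huv).mp huA
    obtain ⟨Z, hZ, hvZ⟩ := exists_isVerifying_mem hAB hd hvd hvA
    have huZ : u ∈ Z := (hZ.mem_iff_mem_of_hookedUp hAB hc huc).mp huA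
    exact hZ.isInevitable (mk_mem_edgesIn.mpr ⟨huv, huZ, hvZ⟩)
  · have hvA : v ∉ A := (mem_iff_notMem_of_adj hAB huv).mp huA
    have huD : u ∉ Dset G b := fun huD => hd (Or.inl ⟨u, ⟨hud, huA⟩, huD⟩)
    obtain ⟨Z, hZ, huZ⟩ := exists_isVerifying_notMem hAB huD
    have hvZ : v ∉ Z := mt (hZ.mem_iff_mem_of_hookedUp hAB hc hvc).mpr hvA
    exact hZ.isForbidden huv huZ hvZ
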